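/- Let E be a measurable space, μ a probability measure on E, and (κ_t)_{t≥0} a semigroup of Markov kernels on E with μ invariant for every κ_t. Suppose there exists a family of Markov kernels (κ̂_t)_{t≥0} dual to (κ_t) with respect to μ, i.e. ∫ f(x) (κ_t g)(x) μ(dx) = ∫ g(x) (κ̂_t f)(x) μ(dx) for all bounded measurable f, g and all t ≥ 0. Assume there exists t₁ > 0 such that ‖κ̂_{t₁} g‖_{L²(μ)} ≤ ‖g‖_{L^{4/3}(μ)} for every bounded measurable g : E → ℝ. Then there exist constants c₀, λ₀ > 0, depending only on t₁ (in particular independent of N), such that for every N ≥ 1, every probability measure ν^N on E^N, and every t ≥ 0: Ent( ν^N κ_t^{⊗N} | μ^{⊗N} ) ≤ c₀ e^{−λ₀ t} Ent( ν^N | μ^{⊗N} ), where κ_t^{⊗N} is the N-fold product kernel acting on measures by (ν κ^{⊗N})(A) = ∫ κ^{⊗N}(𝐱, A) ν(d𝐱). -/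

import Mathlib

open MeasureTheory ProbabilityTheory
open scoped ENNReal NNReal

/-- A bounded measurable real-valued function. -/
def BddMeasurableFn {E : Type*} [MeasurableSpace E] (f : E → ℝ) : Prop :=
  Measurable f ∧ ∃ C : ℝ, ∀ x, |f x| ≤ C

/-- `(κ t)_{t ≥ 0}` is a semigroup of Markov kernels. -/
structure IsMarkovSemigroup {E : Type*} [MeasurableSpace E] (κ : ℝ → Kernel E E) : Prop where
  markov : ∀ t : ℝ, IsMarkovKernel (κ t)
  id_zero : κ 0 = Kernel.id
  semigroup : ∀ s t : ℝ, 0 ≤ s → 0 ≤ t → κ (t + s) = (κ t) ∘ₖ (κ s)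

open Classical in
/-- The relative entropy `Ent(ν|μ) = ∫ log (dν/dμ) dν` if `ν ≪ μ` (and `+∞` otherwise). -/
noncomputable def relEnt {E : Type*} [MeasurableSpace E] (ν μ : Measure E) : ℝ≥0∞ :=
  if ν ≪ μ ∧ Integrable (llr ν μ) ν then ENNReal.ofReal (∫ x, llr ν μ x ∂ν) else ∞

/-!
Hypercontractivity tensorizes without loss of constants, so it is turned into entropy decay only
after passing to the product. By duality, `κhat : L^{4/3} → L²` is a contraction iff `κ : L² → L⁴`
is one, and by Minkowski's integral inequality products of positive `L^p → L^q` contractions are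
again contractions, so `P = κ^{⊗N} : L² → L⁴` is one for every `N`.

Let `m` be invariant under `P` and `ρ` the density of `νP`. By Jensen, `F = (q/p) P log ρ` satisfies
`exp F ≤ (P ρ^{1/p})^q`, whose `m`-integral is at most `(∫ ρ dm)^{q/p} = 1`. Gibbs' variational
principle then gives `(q/p) Ent(νP | m) = ∫ F dν ≤ Ent(ν | m)`. The data processing inequality
ensures that `log ρ` is integrable, and that entropy does not increase between multiples of `t₁`, so
iterating the factor `p/q` yields exponential decay.
-/

section Hypercontractivity

variable {X Y : Type*} [MeasurableSpace X] [MeasurableSpace Y] {κ : Kernel X Y} {κhat : Kernel Y X}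
  {μ : Measure X} {ν : Measure Y} {p q p' q' : ℝ}

/-- `κ` is a contraction from `L^p(ν)` to `L^q(μ)`, `‖κ g‖_{L^q(μ)} ≤ ‖g‖_{L^p(ν)}`. The inequality
is stated for nonnegative `g`, where `κ g` needs no integrability, and raised to the power `q`. -/
def IsHypercontractive (κ : Kernel X Y) (μ : Measure X) (ν : Measure Y) (p q : ℝ) : Prop :=
  ∀ g : Y → ℝ≥0∞, Measurable g →
    ∫⁻ x, (∫⁻ y, g y ∂κ x) ^ q ∂μ ≤ (∫⁻ y, g y ^ p ∂ν) ^ (q / p)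

lemma IsHypercontractive.of_bounded (hp : 0 < p) (hq : 0 < q)
    (h : ∀ g : Y → ℝ≥0∞, Measurable g → ∀ C : ℝ≥0, (∀ y, g y ≤ C) →
      ∫⁻ x, (∫⁻ y, g y ∂κ x) ^ q ∂μ ≤ (∫⁻ y, g y ^ p ∂ν) ^ (q / p)) :
    IsHypercontractive κ μ ν p q := by
  intro g hg
  have hmeas (n : ℕ) : Measurable fun y => min (g y) n := hg.min measurable_const
  have hmono (y : Y) : Monotone fun n : ℕ => min (g y) (n : ℝ≥0∞) := fun _ _ hnk =>
    min_le_min_left _ (Nat.cast_le.2 hnk)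
  have htendsto (y : Y) :
      Filter.Tendsto (fun n : ℕ => min (g y) (n : ℝ≥0∞)) Filter.atTop (nhds (g y)) := by
    simpa using tendsto_const_nhds.min ENNReal.tendsto_nat_nhds_top
  have hκ_tendsto (x : X) : Filter.Tendsto (fun n : ℕ => (∫⁻ y, min (g y) n ∂κ x) ^ q)
      Filter.atTop (nhds ((∫⁻ y, g y ∂κ x) ^ q)) :=
    (ENNReal.continuous_rpow_const.tendsto _).comp
      (lintegral_tendsto_of_tendsto_of_monotone (fun n => (hmeas n).aemeasurable)
        (ae_of_all _ hmono) (ae_of_all _ htendsto))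
  refine le_of_tendsto' (lintegral_tendsto_of_tendsto_of_monotone
    (fun n => ((hmeas n).lintegral_kernel.pow_const q).aemeasurable)
    (ae_of_all _ fun x _ _ hnk => ENNReal.rpow_le_rpow
      (lintegral_mono fun y => hmono y hnk) hq.le) (ae_of_all _ hκ_tendsto)) fun n => ?_
  refine (h _ (hmeas n) n fun y => by simp).trans ?_
  gcongr
  exact min_le_left _ _

lemma IsHypercontractive.of_eLpNorm_le [IsFiniteKernel κ] (hp : 0 < p) (hq : 0 < q)
    (h : ∀ g : Y → ℝ, BddMeasurableFn g →
      eLpNorm (fun x => ∫ y, g y ∂κ x) (ENNReal.ofReal q) μ ≤ eLpNorm g (ENNReal.ofReal p) ν) :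
    IsHypercontractive κ μ ν p q := by
  refine .of_bounded hp hq fun g hg C hgC => ?_
  have hg_top (y : Y) : g y < ∞ := (hgC y).trans_lt ENNReal.coe_lt_top
  have hκg_top (x : X) : ∫⁻ y, g y ∂κ x < ∞ :=
    (lintegral_mono hgC).trans_lt (by simp [ENNReal.mul_lt_top])
  have hbdd : BddMeasurableFn fun y => (g y).toReal :=
    ⟨hg.ennreal_toReal, C, fun y => by
      simpa using ENNReal.toReal_mono ENNReal.coe_ne_top (hgC y)⟩
  have hnorm := h _ hbdd
  simp only [integral_toReal hg.aemeasurable (ae_of_all _ hg_top)] at hnorm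
  rw [eLpNorm_eq_lintegral_rpow_enorm_toReal (by simpa using hq) ENNReal.ofReal_ne_top,
    eLpNorm_eq_lintegral_rpow_enorm_toReal (by simpa using hp) ENNReal.ofReal_ne_top,
    ENNReal.toReal_ofReal hp.le, ENNReal.toReal_ofReal hq.le] at hnorm
  simp only [Real.enorm_toReal (hκg_top _).ne, Real.enorm_toReal (hg_top _).ne] at hnorm
  calc ∫⁻ x, (∫⁻ y, g y ∂κ x) ^ q ∂μ
      = ((∫⁻ x, (∫⁻ y, g y ∂κ x) ^ q ∂μ) ^ (1 / q)) ^ q := by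
        rw [← ENNReal.rpow_mul, one_div_mul_cancel hq.ne', ENNReal.rpow_one]
    _ ≤ ((∫⁻ y, g y ^ p ∂ν) ^ (1 / p)) ^ q := ENNReal.rpow_le_rpow hnorm hq.le
    _ = (∫⁻ y, g y ^ p ∂ν) ^ (q / p) := by rw [← ENNReal.rpow_mul, one_div_mul_eq_div]

lemma bddMeasurableFn_indicator_one {s : Set X} (hs : MeasurableSet s) :
    BddMeasurableFn (s.indicator (1 : X → ℝ)) :=
  ⟨measurable_one.indicator hs, 1, fun x => by by_cases hx : x ∈ s <;> simp [hx]⟩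

lemma measureReal_compProd_prod_eq_integral [IsFiniteMeasure μ] [IsFiniteKernel κ] {s : Set X}
    {t : Set Y} (hs : MeasurableSet s) (ht : MeasurableSet t) : (μ ⊗ₘ κ).real (s ×ˢ t) =
      ∫ x, s.indicator 1 x * ∫ y, t.indicator (1 : Y → ℝ) y ∂κ x ∂μ := by
  simp_rw [integral_indicator_one ht, measureReal_def, Measure.compProd_apply_prod hs ht]
  rw [← integral_toReal (κ.measurable_coe ht).aemeasurable
    (ae_of_all _ fun x => measure_lt_top _ _), ← integral_indicator hs]
  exact integral_congr_ae (ae_of_all _ fun x => by by_cases hx : x ∈ s <;> simp [hx])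

lemma map_swap_compProd_of_integral_mul_eq [IsFiniteMeasure μ] [IsFiniteMeasure ν]
    [IsFiniteKernel κ] [IsFiniteKernel κhat]
    (h : ∀ (f : X → ℝ) (g : Y → ℝ), BddMeasurableFn f → BddMeasurableFn g →
      ∫ x, f x * ∫ y, g y ∂κ x ∂μ = ∫ y, g y * ∫ x, f x ∂κhat y ∂ν) :
    (μ ⊗ₘ κ).map Prod.swap = ν ⊗ₘ κhat := by
  refine Measure.ext_prod fun {t s} ht hs => ?_
  rw [Measure.map_apply measurable_swap (ht.prod hs), Set.preimage_swap_prod,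
    ← measureReal_eq_measureReal_iff, measureReal_compProd_prod_eq_integral hs ht,
    measureReal_compProd_prod_eq_integral ht hs]
  exact h _ _ (bddMeasurableFn_indicator_one hs) (bddMeasurableFn_indicator_one ht)

lemma lintegral_mul_lintegral_of_map_swap_compProd [SFinite μ] [SFinite ν] [IsSFiniteKernel κ]
    [IsSFiniteKernel κhat]
    (h : (μ ⊗ₘ κ).map Prod.swap = ν ⊗ₘ κhat)
    {f : X → ℝ≥0∞} {g : Y → ℝ≥0∞} (hf : Measurable f) (hg : Measurable g) :
    ∫⁻ x, f x * ∫⁻ y, g y ∂κ x ∂μ = ∫⁻ y, g y * ∫⁻ x, f x ∂κhat y ∂ν := by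
  have hgf : Measurable fun z : Y × X => g z.1 * f z.2 := by fun_prop
  calc ∫⁻ x, f x * ∫⁻ y, g y ∂κ x ∂μ = ∫⁻ x, ∫⁻ y, g y * f x ∂κ x ∂μ := by
        simp_rw [lintegral_mul_const _ hg, mul_comm]
    _ = ∫⁻ z, g z.1 * f z.2 ∂(μ ⊗ₘ κ).map Prod.swap := by
        rw [lintegral_map hgf measurable_swap]
        exact (Measure.lintegral_compProd (hgf.comp measurable_swap)).symm
    _ = ∫⁻ y, g y * ∫⁻ x, f x ∂κhat y ∂ν := by
        rw [h, Measure.lintegral_compProd hgf]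
        simp_rw [lintegral_const_mul _ hf]

lemma le_rpow_of_le_mul_rpow (h : q.HolderConjugate q') {a b : ℝ≥0∞} (ha : a ≠ ∞)
    (hab : a ≤ b * a ^ (1 / q')) : a ≤ b ^ q := by
  rcases eq_or_ne a 0 with rfl | ha₀
  · exact zero_le
  have hsplit : a ^ (1 / q) * a ^ (1 / q') = a := by
    rw [← ENNReal.rpow_add _ _ ha₀ ha, one_div, one_div, h.inv_add_inv_eq_one, ENNReal.rpow_one]
  have hroot : a ^ (1 / q) ≤ b := by
    refine (ENNReal.mul_le_mul_iff_left ?_ ?_).1 (hsplit.trans_le hab)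
    · simp [ENNReal.rpow_eq_zero_iff, ha₀, ha]
    · simp [ENNReal.rpow_eq_top_iff, ha₀, ha]
  rwa [one_div, ENNReal.rpow_inv_le_iff h.pos] at hroot

lemma lintegral_rpow_lintegral_ne_top [IsFiniteMeasure μ] [IsFiniteKernel κ] (hq : 0 ≤ q)
    {g : Y → ℝ≥0∞} {C : ℝ≥0} (hgC : ∀ y, g y ≤ C) : ∫⁻ x, (∫⁻ y, g y ∂κ x) ^ q ∂μ ≠ ∞ := by
  have hu_le (x : X) : ∫⁻ y, g y ∂κ x ≤ C * κ.bound := (lintegral_mono hgC).trans <| by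
    simpa using by gcongr; exact κ.measure_le_bound x _
  refine ((lintegral_mono fun x => ENNReal.rpow_le_rpow (hu_le x) hq).trans_lt ?_).ne
  rw [lintegral_const]
  exact ENNReal.mul_lt_top (ENNReal.rpow_lt_top_of_nonneg hq
    (ENNReal.mul_ne_top ENNReal.coe_ne_top κ.bound_ne_top)) (measure_lt_top μ _)

-- Test the dual bound on `(κ g)^(q-1)`: `‖κ g‖_q^q = ⟨g, κhat (κ g)^(q-1)⟩ ≤ ‖g‖_p ‖κ g‖_q^(q-1)`.
lemma IsHypercontractive.of_dual [IsFiniteMeasure μ] [SFinite ν] [IsFiniteKernel κ]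
    [IsSFiniteKernel κhat] (hpp' : p.HolderConjugate p') (hqq' : q.HolderConjugate q')
    (hdual : (μ ⊗ₘ κ).map Prod.swap = ν ⊗ₘ κhat) (h : IsHypercontractive κhat ν μ q' p') :
    IsHypercontractive κ μ ν p q := by
  refine .of_bounded hpp'.pos hqq'.pos fun g hg C hgC => ?_
  set u : X → ℝ≥0∞ := fun x => ∫⁻ y, g y ∂κ x
  have hu : Measurable u := hg.lintegral_kernel
  set A := ∫⁻ x, u x ^ q ∂μ
  have hA_top : A ≠ ∞ := lintegral_rpow_lintegral_ne_top hqq'.nonneg hgC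
  have hA : A ≤ (∫⁻ y, g y ^ p ∂ν) ^ (1 / p) * A ^ (1 / q') :=
    calc A = ∫⁻ x, u x ^ (q - 1) * ∫⁻ y, g y ∂κ x ∂μ := by
          refine lintegral_congr fun x => ?_
          nth_rewrite 1 [← sub_add_cancel q 1]
          rw [ENNReal.rpow_add_of_nonneg _ _ (sub_nonneg.2 hqq'.lt.le) zero_le_one,
            ENNReal.rpow_one]
      _ = ∫⁻ y, g y * ∫⁻ x, u x ^ (q - 1) ∂κhat y ∂ν :=
          lintegral_mul_lintegral_of_map_swap_compProd hdual (hu.pow_const _) hg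
      _ ≤ (∫⁻ y, g y ^ p ∂ν) ^ (1 / p) *
            (∫⁻ y, (∫⁻ x, u x ^ (q - 1) ∂κhat y) ^ p' ∂ν) ^ (1 / p') :=
          ENNReal.lintegral_mul_le_Lp_mul_Lq ν hpp' hg.aemeasurable
            (hu.pow_const _).lintegral_kernel.aemeasurable
      _ ≤ (∫⁻ y, g y ^ p ∂ν) ^ (1 / p) *
            ((∫⁻ x, (u x ^ (q - 1)) ^ q' ∂μ) ^ (p' / q')) ^ (1 / p') := by
          gcongr
          · exact one_div_nonneg.2 hpp'.symm.nonneg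
          · exact h _ (hu.pow_const _)
      _ = (∫⁻ y, g y ^ p ∂ν) ^ (1 / p) * A ^ (1 / q') := by
          have := hpp'.symm.ne_zero
          simp_rw [← ENNReal.rpow_mul, hqq'.sub_one_mul_conj]
          congr 2
          field_simp
  calc A ≤ ((∫⁻ y, g y ^ p ∂ν) ^ (1 / p)) ^ q := le_rpow_of_le_mul_rpow hqq' hA_top hA
    _ = (∫⁻ y, g y ^ p ∂ν) ^ (q / p) := by rw [← ENNReal.rpow_mul, one_div_mul_eq_div]

end Hypercontractivity

section Minkowski

variable {X Y : Type*} [MeasurableSpace X] [MeasurableSpace Y] {μ : Measure X} {ν : Measure Y}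
  {p : ℝ}

lemma lintegral_rpow_le_lintegral_mul_rpow_mul (hp : 1 < p) {f w : Y → ℝ≥0∞} (hf : Measurable f)
    (hw : Measurable w) (hw_top : ∀ᵐ y ∂ν, w y ≠ ∞) (hfw : ∀ᵐ y ∂ν, w y = 0 → f y = 0) :
    (∫⁻ y, f y ∂ν) ^ p ≤ (∫⁻ y, f y ^ p * w y ^ (1 - p) ∂ν) * (∫⁻ y, w y ∂ν) ^ (p - 1) := by
  have hpp' := Real.HolderConjugate.conjExponent hp
  set p' := p.conjExponent
  have hexp : 1 / p' * p = p - 1 := by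
    rw [one_div, ← hpp'.one_sub_inv, sub_mul, one_mul, inv_mul_cancel₀ hpp'.ne_zero]
  have hsplit : ∀ᵐ y ∂ν, f y = f y * w y ^ (-(1 / p')) * w y ^ (1 / p') := by
    filter_upwards [hw_top, hfw] with y hy_top hy
    rcases eq_or_ne (w y) 0 with h₀ | h₀
    · simp [hy h₀]
    · rw [mul_assoc, ← ENNReal.rpow_add _ _ h₀ hy_top, neg_add_cancel, ENNReal.rpow_zero, mul_one]
  calc (∫⁻ y, f y ∂ν) ^ p
      = (∫⁻ y, f y * w y ^ (-(1 / p')) * w y ^ (1 / p') ∂ν) ^ p := by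
        rw [lintegral_congr_ae hsplit]
    _ ≤ ((∫⁻ y, (f y * w y ^ (-(1 / p'))) ^ p ∂ν) ^ (1 / p) *
          (∫⁻ y, (w y ^ (1 / p')) ^ p' ∂ν) ^ (1 / p')) ^ p := by
        refine ENNReal.rpow_le_rpow ?_ hpp'.nonneg
        exact ENNReal.lintegral_mul_le_Lp_mul_Lq ν hpp' (hf.mul (hw.pow_const _)).aemeasurable
          (hw.pow_const _).aemeasurable
    _ = (∫⁻ y, f y ^ p * w y ^ (1 - p) ∂ν) * (∫⁻ y, w y ∂ν) ^ (p - 1) := by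
        simp_rw [ENNReal.mul_rpow_of_nonneg _ _ hpp'.nonneg, ← ENNReal.rpow_mul, neg_mul, hexp,
          neg_sub, one_div_mul_cancel hpp'.ne_zero, one_div_mul_cancel hpp'.symm.ne_zero,
          ENNReal.rpow_one]

lemma ae_ae_eq_zero_of_lintegral_eq_zero [SFinite μ] [SFinite ν] {F : X → Y → ℝ≥0∞}
    (hF : Measurable (Function.uncurry F)) :
    ∀ᵐ x ∂μ, ∀ᵐ y ∂ν, ∫⁻ x', F x' y ∂μ = 0 → F x y = 0 := by
  have hF_zero : MeasurableSet {z : X × Y | F z.1 z.2 = 0} := hF (measurableSet_singleton 0)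
  refine (Measure.ae_ae_comm ?_).2 (ae_of_all _ fun y => ?_)
  · exact ((hF.lintegral_prod_left.comp measurable_snd) (measurableSet_singleton 0)).imp hF_zero
  · by_cases hy : ∫⁻ x', F x' y ∂μ = 0
    · have hF_y : Measurable fun x => F x y := hF.comp measurable_prodMk_right
      filter_upwards [(lintegral_eq_zero_iff hF_y).1 hy] with x hx _ using hx
    · simp [hy]

-- Minkowski's integral inequality. Hölder is applied with weight `s z = ‖F(·, z)‖_p`, chosen so
-- that `∫ F a z ^ p * s z ^ (1 - p) ∂μ = s z`.
lemma lintegral_rpow_lintegral_le [SFinite μ] [SFinite ν] (hp : 1 ≤ p) {F : X → Y → ℝ≥0∞}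
    (hF : Measurable (Function.uncurry F)) :
    ∫⁻ x, (∫⁻ y, F x y ∂ν) ^ p ∂μ ≤ (∫⁻ y, (∫⁻ x, F x y ^ p ∂μ) ^ (1 / p) ∂ν) ^ p := by
  rcases hp.eq_or_lt with rfl | hp
  · simp [lintegral_lintegral_swap hF.aemeasurable]
  have hp₀ : 0 < p := one_pos.trans hp
  have hFp : Measurable (Function.uncurry fun x y => F x y ^ p) := hF.pow_const p
  set s : Y → ℝ≥0∞ := fun y => (∫⁻ x, F x y ^ p ∂μ) ^ (1 / p)
  have hs : Measurable s := hFp.lintegral_prod_left.pow_const _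
  set S := ∫⁻ y, s y ∂ν
  rcases eq_or_ne S ∞ with hS | hS
  · simp [hS, ENNReal.top_rpow_of_pos hp₀]
  have hs_pow (y : Y) : ∫⁻ x, F x y ^ p ∂μ = s y ^ p := by
    rw [← ENNReal.rpow_mul, one_div_mul_cancel hp₀.ne', ENNReal.rpow_one]
  have hs_top : ∀ᵐ y ∂ν, s y ≠ ∞ := (ae_lt_top hs hS).mono fun _ h => h.ne
  have hF_zero : ∀ᵐ x ∂μ, ∀ᵐ y ∂ν, s y = 0 → F x y = 0 :=
    (ae_ae_eq_zero_of_lintegral_eq_zero hFp).mono fun x hx => hx.mono fun y hy hsy => by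
      simpa [hp₀, hp₀.not_gt, hs_pow, hsy] using hy
  calc ∫⁻ x, (∫⁻ y, F x y ∂ν) ^ p ∂μ
      ≤ ∫⁻ x, (∫⁻ y, F x y ^ p * s y ^ (1 - p) ∂ν) * S ^ (p - 1) ∂μ :=
        lintegral_mono_ae <| hF_zero.mono fun x hx =>
          lintegral_rpow_le_lintegral_mul_rpow_mul hp (hF.comp measurable_prodMk_left) hs hs_top hx
    _ = (∫⁻ y, s y ^ p * s y ^ (1 - p) ∂ν) * S ^ (p - 1) := by
        rw [lintegral_mul_const' _ _ (ENNReal.rpow_ne_top_of_nonneg (sub_nonneg.2 hp.le) hS),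
          lintegral_lintegral_swap
            (hFp.mul ((hs.pow_const _).comp measurable_snd)).aemeasurable]
        congr 1
        refine lintegral_congr fun y => ?_
        rw [← hs_pow]
        exact lintegral_mul_const _ (hFp.comp measurable_prodMk_right)
    _ ≤ S * S ^ (p - 1) := by
        gcongr ?_ * _
        refine lintegral_mono_ae <| hs_top.mono fun y hy => ?_
        rcases eq_or_ne (s y) 0 with h₀ | h₀
        · simp [h₀, hp₀]
        · rw [← ENNReal.rpow_add _ _ h₀ hy, add_sub_cancel, ENNReal.rpow_one]
    _ = S ^ p := by
        nth_rewrite 1 [← ENNReal.rpow_one S]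
        rw [← ENNReal.rpow_add_of_nonneg _ _ zero_le_one (sub_nonneg.2 hp.le), add_sub_cancel]

end Minkowski

section Tensorization

variable {X Y X' Y' : Type*} [MeasurableSpace X] [MeasurableSpace Y] [MeasurableSpace X']
  [MeasurableSpace Y'] {κ : Kernel X Y} {κ' : Kernel X' Y'} {μ : Measure X} {μ' : Measure X'}
  {ν : Measure Y} {ν' : Measure Y'} {p q : ℝ}

lemma IsHypercontractive.parallelComp [IsSFiniteKernel κ] [IsSFiniteKernel κ'] [SFinite μ]
    [SFinite μ'] [SFinite ν] [SFinite ν'] (hp : 1 ≤ p) (hq : 0 ≤ q)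
    (h : IsHypercontractive κ μ ν p q) (h' : IsHypercontractive κ' μ' ν' p q) :
    IsHypercontractive (κ ∥ₖ κ') (μ.prod μ') (ν.prod ν') p q := by
  intro g hg
  have hp₀ : 0 < p := one_pos.trans_le hp
  have hgp : Measurable fun z => g z ^ p := hg.pow_const p
  set s : Y' → ℝ≥0∞ := fun y' => (∫⁻ y, g (y, y') ^ p ∂ν) ^ (1 / p)
  have hs : Measurable s := hgp.lintegral_prod_left'.pow_const _
  have hκ (x' : X') : ∫⁻ x, (∫⁻ z, g z ∂(κ ∥ₖ κ') (x, x')) ^ q ∂μ ≤ (∫⁻ y', s y' ∂κ' x') ^ q :=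
    calc ∫⁻ x, (∫⁻ z, g z ∂(κ ∥ₖ κ') (x, x')) ^ q ∂μ
        = ∫⁻ x, (∫⁻ y, ∫⁻ y', g (y, y') ∂κ' x' ∂κ x) ^ q ∂μ := by
          simp_rw [Kernel.parallelComp_apply, lintegral_prod _ hg.aemeasurable]
      _ ≤ (∫⁻ y, (∫⁻ y', g (y, y') ∂κ' x') ^ p ∂ν) ^ (q / p) := h _ hg.lintegral_prod_right'
      _ ≤ ((∫⁻ y', s y' ∂κ' x') ^ p) ^ (q / p) :=
          ENNReal.rpow_le_rpow (lintegral_rpow_lintegral_le hp hg) (by positivity)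
      _ = (∫⁻ y', s y' ∂κ' x') ^ q := by
          rw [← ENNReal.rpow_mul, mul_div_cancel₀ _ hp₀.ne']
  calc ∫⁻ w, (∫⁻ z, g z ∂(κ ∥ₖ κ') w) ^ q ∂(μ.prod μ')
      = ∫⁻ x', ∫⁻ x, (∫⁻ z, g z ∂(κ ∥ₖ κ') (x, x')) ^ q ∂μ ∂μ' :=
        lintegral_prod_symm _ (hg.lintegral_kernel.pow_const q).aemeasurable
    _ ≤ ∫⁻ x', (∫⁻ y', s y' ∂κ' x') ^ q ∂μ' := lintegral_mono hκ
    _ ≤ (∫⁻ y', s y' ^ p ∂ν') ^ (q / p) := h' s hs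
    _ = (∫⁻ z, g z ^ p ∂(ν.prod ν')) ^ (q / p) := by
        simp_rw [lintegral_prod_symm _ hgp.aemeasurable, s, ← ENNReal.rpow_mul,
          one_div_mul_cancel hp₀.ne', ENNReal.rpow_one]

lemma IsHypercontractive.of_measurePreserving {e : X → X'} (he : MeasurePreserving e μ μ')
    {e' : Y ≃ᵐ Y'} (he' : MeasurePreserving e' ν ν') (hκ : ∀ x, (κ x).map e' = κ' (e x))
    (h : IsHypercontractive κ' μ' ν' p q) : IsHypercontractive κ μ ν p q := by
  intro g hg
  have hg' : Measurable (g ∘ e'.symm) := hg.comp e'.symm.measurable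
  have hκg (x : X) : ∫⁻ y, g y ∂κ x = ∫⁻ y', (g ∘ e'.symm) y' ∂κ' (e x) := by
    simp [← hκ, lintegral_map_equiv]
  calc ∫⁻ x, (∫⁻ y, g y ∂κ x) ^ q ∂μ
      = ∫⁻ x', (∫⁻ y', (g ∘ e'.symm) y' ∂κ' x') ^ q ∂μ' := by
        simp_rw [hκg]
        exact he.lintegral_comp (hg'.lintegral_kernel.pow_const q)
    _ ≤ (∫⁻ y', (g ∘ e'.symm) y' ^ p ∂ν') ^ (q / p) := h _ hg'
    _ = (∫⁻ y, g y ^ p ∂ν) ^ (q / p) := by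
        rw [← he'.lintegral_comp (hg'.pow_const p)]
        simp

end Tensorization

section PiKernel

variable {ι : Type*} [Fintype ι] {X Y Z : ι → Type*} [∀ i, MeasurableSpace (X i)]
  [∀ i, MeasurableSpace (Y i)] [∀ i, MeasurableSpace (Z i)]

/-- The product kernel `⨂ᵢ κᵢ`, sending `x` to the product measure `⨂ᵢ κᵢ(xᵢ, ·)`. -/
noncomputable def piKernel (κ : ∀ i, Kernel (X i) (Y i)) [∀ i, IsMarkovKernel (κ i)] :
    Kernel (∀ i, X i) (∀ i, Y i) where
  toFun x := Measure.pi fun i => κ i (x i)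
  measurable' := by
    refine Measurable.measure_of_isPiSystem_of_isProbabilityMeasure generateFrom_pi.symm
      isPiSystem_pi ?_
    rintro _ ⟨s, hs, rfl⟩
    simp only [Measure.pi_pi]
    exact Finset.measurable_prod _ fun i _ =>
      ((κ i).measurable_coe (hs i (Set.mem_univ i))).comp (measurable_pi_apply i)

lemma piKernel_apply (κ : ∀ i, Kernel (X i) (Y i)) [∀ i, IsMarkovKernel (κ i)] (x : ∀ i, X i) :
    piKernel κ x = Measure.pi fun i => κ i (x i) := rfl

instance (κ : ∀ i, Kernel (X i) (Y i)) [∀ i, IsMarkovKernel (κ i)] :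
    IsMarkovKernel (piKernel κ) :=
  ⟨fun x => by rw [piKernel_apply]; infer_instance⟩

lemma piKernel_comp_pi (κ : ∀ i, Kernel (X i) (Y i)) [∀ i, IsMarkovKernel (κ i)]
    (μ : ∀ i, Measure (X i)) [∀ i, IsProbabilityMeasure (μ i)] :
    piKernel κ ∘ₘ Measure.pi μ = Measure.pi fun i => κ i ∘ₘ μ i := by
  refine (Measure.pi_eq fun s hs => ?_).symm
  have hκs (i : ι) : Measurable fun a => κ i a (s i) := (κ i).measurable_coe (hs i)
  calc (piKernel κ ∘ₘ Measure.pi μ) (Set.univ.pi s)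
      = ∫⁻ x, ∏ i, κ i (x i) (s i) ∂Measure.pi μ := by
        rw [Measure.bind_apply (.univ_pi hs) (piKernel κ).aemeasurable]
        simp only [piKernel_apply, Measure.pi_pi]
    _ = ∏ i, ∫⁻ x, κ i (x i) (s i) ∂Measure.pi μ :=
        lintegral_prod_eq_prod_lintegral_of_indepFun Finset.univ _
          (iIndepFun_pi fun i => (hκs i).aemeasurable)
          fun i => (hκs i).comp (measurable_pi_apply i)
    _ = ∏ i, (κ i ∘ₘ μ i) (s i) := by
        refine Finset.prod_congr rfl fun i _ => ?_
        rw [Measure.bind_apply (hs i) (κ i).aemeasurable]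
        exact (measurePreserving_eval μ i).lintegral_comp (hκs i)

lemma piKernel_comp_piKernel (η : ∀ i, Kernel (Y i) (Z i)) (κ : ∀ i, Kernel (X i) (Y i))
    [∀ i, IsMarkovKernel (η i)] [∀ i, IsMarkovKernel (κ i)] :
    piKernel η ∘ₖ piKernel κ = piKernel fun i => η i ∘ₖ κ i := by
  ext1 x
  simp_rw [Kernel.comp_apply, piKernel_apply, piKernel_comp_pi, Kernel.comp_apply]

lemma piKernel_id : piKernel (fun i => (Kernel.id : Kernel (X i) (X i))) = Kernel.id := by
  ext1 x
  rw [piKernel_apply, Kernel.id_apply]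
  refine Measure.pi_eq fun s hs => ?_
  classical
  simp [Kernel.id_apply, hs, MeasurableSet.univ_pi, Set.indicator_apply, Finset.prod_ite_zero]

lemma IsHypercontractive.pi {p q : ℝ} (hp : 1 ≤ p) (hq : 0 ≤ q) {n : ℕ} {X Y : Fin n → Type*}
    [∀ i, MeasurableSpace (X i)] [∀ i, MeasurableSpace (Y i)] {κ : ∀ i, Kernel (X i) (Y i)}
    [∀ i, IsMarkovKernel (κ i)] {μ : ∀ i, Measure (X i)} [∀ i, IsProbabilityMeasure (μ i)]
    {ν : ∀ i, Measure (Y i)} [∀ i, IsProbabilityMeasure (ν i)]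
    (h : ∀ i, IsHypercontractive (κ i) (μ i) (ν i) p q) :
    IsHypercontractive (piKernel κ) (Measure.pi μ) (Measure.pi ν) p q := by
  induction n with
  | zero =>
    intro g _
    have hg_const : g = fun _ => g finZeroElim := funext fun y => congrArg g (Subsingleton.elim _ _)
    rw [hg_const]
    simp [← ENNReal.rpow_mul, mul_div_cancel₀ q (one_pos.trans_le hp).ne']
  | succ n ih =>
    refine .of_measurePreserving (measurePreserving_piFinSuccAbove μ 0)
      (measurePreserving_piFinSuccAbove ν 0) (fun x => ?_)
      ((h 0).parallelComp hp hq (ih fun j => h (Fin.succAbove 0 j)))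
    rw [Kernel.parallelComp_apply]
    exact (measurePreserving_piFinSuccAbove (fun i => κ i (x i)) 0).map_eq

end PiKernel

section Entropy

open InformationTheory

variable {X Y : Type*} [MeasurableSpace X] [MeasurableSpace Y]

lemma relEnt_eq_klDiv (ν μ : Measure X) [IsProbabilityMeasure ν] [IsProbabilityMeasure μ] :
    relEnt ν μ = klDiv ν μ := by
  simp [relEnt, klDiv_def]

lemma ofReal_exp_integral_le {μ : Measure X} [IsProbabilityMeasure μ] {f : X → ℝ}
    (hf : Integrable f μ) :
    ENNReal.ofReal (Real.exp (∫ x, f x ∂μ)) ≤ ∫⁻ x, ENNReal.ofReal (Real.exp (f x)) ∂μ := by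
  by_cases hexp : Integrable (fun x => Real.exp (f x)) μ
  · rw [← ofReal_integral_eq_lintegral_ofReal hexp (ae_of_all _ fun x => (Real.exp_pos _).le)]
    exact ENNReal.ofReal_le_ofReal (convexOn_exp.map_integral_le Real.continuousOn_exp
      isClosed_univ (by simp) hf hexp)
  · have htop : ∫⁻ x, ENNReal.ofReal (Real.exp (f x)) ∂μ = ∞ := by
      by_contra h
      exact hexp ((lintegral_ofReal_ne_top_iff_integrable
        (Real.continuous_exp.comp_aestronglyMeasurable hf.1)
        (ae_of_all _ fun x => (Real.exp_pos _).le)).1 h)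
    simp [htop]

-- Gibbs' variational principle: integrate `F - llr ≤ exp (F - llr) - 1` against `ν`.
lemma integral_le_integral_llr {ν m : Measure X} [IsProbabilityMeasure ν] [SigmaFinite m]
    (hac : ν ≪ m) (hllr : Integrable (llr ν m) ν) {F : X → ℝ} (hF : Integrable F ν)
    {Q : X → ℝ≥0∞} (hQ : Measurable Q) (hQ_le : ∫⁻ x, Q x ∂m ≤ 1)
    (hFQ : ∀ᵐ x ∂ν, ENNReal.ofReal (Real.exp (F x)) ≤ Q x) :
    ∫ x, F x ∂ν ≤ ∫ x, llr ν m x ∂ν := by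
  set G : X → ℝ := fun x => Real.exp (F x - llr ν m x)
  have hG_nonneg : 0 ≤ᵐ[ν] G := ae_of_all _ fun x => (Real.exp_pos _).le
  have hG_meas : AEStronglyMeasurable G ν :=
    Real.continuous_exp.comp_aestronglyMeasurable (hF.sub hllr).1
  have hG_le : ∫⁻ x, ENNReal.ofReal (G x) ∂ν ≤ 1 :=
    calc ∫⁻ x, ENNReal.ofReal (G x) ∂ν
        ≤ ∫⁻ x, m.rnDeriv ν x * Q x ∂ν := by
          refine lintegral_mono_ae ?_
          filter_upwards [hFQ, exp_neg_llr hac] with x hx hllr_x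
          simp only [G, sub_eq_neg_add, Real.exp_add, hllr_x]
          rw [ENNReal.ofReal_mul ENNReal.toReal_nonneg]
          exact mul_le_mul' ENNReal.ofReal_toReal_le hx
      _ = ∫⁻ x, Q x ∂ν.withDensity (m.rnDeriv ν) :=
          (lintegral_withDensity_eq_lintegral_mul _ (Measure.measurable_rnDeriv m ν) hQ).symm
      _ ≤ ∫⁻ x, Q x ∂m := lintegral_mono' (Measure.withDensity_rnDeriv_le m ν) le_rfl
      _ ≤ 1 := hQ_le
  have hG : Integrable G ν := (lintegral_ofReal_ne_top_iff_integrable hG_meas hG_nonneg).1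
    (hG_le.trans_lt ENNReal.one_lt_top).ne
  have hG_int : ∫ x, G x ∂ν ≤ 1 := by
    rw [integral_eq_lintegral_of_nonneg_ae hG_nonneg hG_meas]
    exact ENNReal.toReal_le_of_le_ofReal zero_le_one (by simpa using hG_le)
  have hF_le : ∫ x, F x - llr ν m x ∂ν ≤ ∫ x, G x - 1 ∂ν :=
    integral_mono (hF.sub hllr) (hG.sub (integrable_const 1)) fun x =>
      le_sub_iff_add_le.2 (Real.add_one_le_exp _)
  rw [integral_sub hF hllr, integral_sub hG (integrable_const 1)] at hF_le
  simp only [integral_const, probReal_univ, one_smul] at hF_le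
  linarith

lemma ofReal_exp_mul_log_toReal {a : ℝ≥0∞} (ha₀ : 0 < a) (ha : a < ∞) (c : ℝ) :
    ENNReal.ofReal (Real.exp (c * Real.log a.toReal)) = a ^ c := by
  have ha' : 0 < a.toReal := ENNReal.toReal_pos ha₀.ne' ha.ne
  rw [mul_comm, ← Real.rpow_def_of_pos ha', ← ENNReal.ofReal_rpow_of_pos ha',
    ENNReal.ofReal_toReal ha.ne]

lemma ofReal_exp_mul_integral_llr_le {π ν m : Measure Y} [IsProbabilityMeasure π]
    {p q : ℝ} (hq : 0 < q) (hint : Integrable (llr ν m) π)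
    (hpos : ∀ᵐ y ∂π, 0 < ν.rnDeriv m y) (htop : ∀ᵐ y ∂π, ν.rnDeriv m y < ∞) :
    ENNReal.ofReal (Real.exp (q / p * ∫ y, llr ν m y ∂π)) ≤
      (∫⁻ y, ν.rnDeriv m y ^ (1 / p) ∂π) ^ q :=
  calc ENNReal.ofReal (Real.exp (q / p * ∫ y, llr ν m y ∂π))
      = ENNReal.ofReal (Real.exp (∫ y, 1 / p * llr ν m y ∂π)) ^ q := by
        rw [integral_const_mul, ENNReal.ofReal_rpow_of_pos (Real.exp_pos _), ← Real.exp_mul]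
        congr 2
        ring
    _ ≤ (∫⁻ y, ENNReal.ofReal (Real.exp (1 / p * llr ν m y)) ∂π) ^ q :=
        ENNReal.rpow_le_rpow (ofReal_exp_integral_le (hint.const_mul _)) hq.le
    _ = (∫⁻ y, ν.rnDeriv m y ^ (1 / p) ∂π) ^ q := by
        congr 1
        refine lintegral_congr_ae ?_
        filter_upwards [hpos, htop] with y hy₀ hy
        exact ofReal_exp_mul_log_toReal hy₀ hy _

-- Apply Gibbs' principle to `F = (q / p) P log ρ`, with `ρ` the density of `P ∘ₘ ν`: by Jensen
-- `exp F ≤ (P ρ^(1/p))^q`, and hypercontractivity bounds the integral of the latter by `1`.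
lemma IsHypercontractive.mul_integral_llr_comp_le {P : Kernel X Y} [IsMarkovKernel P]
    {ν m : Measure X} [IsProbabilityMeasure ν] [IsProbabilityMeasure m] {p q : ℝ} (hp : 0 < p)
    (hq : 0 < q) (h : IsHypercontractive P m (P ∘ₘ m) p q) (hac : ν ≪ m)
    (hint : Integrable (llr ν m) ν)
    (hint' : Integrable (llr (P ∘ₘ ν) (P ∘ₘ m)) (P ∘ₘ ν)) :
    q / p * ∫ y, llr (P ∘ₘ ν) (P ∘ₘ m) y ∂(P ∘ₘ ν) ≤ ∫ x, llr ν m x ∂ν := by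
  have hac' : P ∘ₘ ν ≪ P ∘ₘ m := hac.comp_right P
  set L := llr (P ∘ₘ ν) (P ∘ₘ m)
  set ρ := (P ∘ₘ ν).rnDeriv (P ∘ₘ m)
  have hρ_meas : Measurable ρ := Measure.measurable_rnDeriv _ _
  have hρ_pos : ∀ᵐ y ∂(P ∘ₘ ν), 0 < ρ y := Measure.rnDeriv_pos hac'
  have hρ_lt_top : ∀ᵐ y ∂(P ∘ₘ ν), ρ y < ∞ := hac'.ae_le (Measure.rnDeriv_lt_top (P ∘ₘ ν) _)
  have hQ_le : ∫⁻ x, (∫⁻ y, ρ y ^ (1 / p) ∂P x) ^ q ∂m ≤ 1 :=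
    calc ∫⁻ x, (∫⁻ y, ρ y ^ (1 / p) ∂P x) ^ q ∂m
        ≤ (∫⁻ y, (ρ y ^ (1 / p)) ^ p ∂(P ∘ₘ m)) ^ (q / p) := h _ (hρ_meas.pow_const _)
      _ = (∫⁻ y, ρ y ∂(P ∘ₘ m)) ^ (q / p) := by
          simp_rw [← ENNReal.rpow_mul, one_div_mul_cancel hp.ne', ENNReal.rpow_one]
      _ ≤ 1 := ENNReal.rpow_le_one (Measure.lintegral_rnDeriv_le.trans prob_le_one)
          (div_pos hq hp).le
  have hFQ : ∀ᵐ x ∂ν, ENNReal.ofReal (Real.exp (q / p * ∫ y, L y ∂P x)) ≤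
      (∫⁻ y, ρ y ^ (1 / p) ∂P x) ^ q := by
    filter_upwards [Measure.ae_integrable_of_integrable_comp hint',
      Measure.ae_ae_of_ae_comp hρ_pos, Measure.ae_ae_of_ae_comp hρ_lt_top] with x hL hpos hlt
    exact ofReal_exp_mul_integral_llr_le hq hL hpos hlt
  have hPL : Integrable (fun x => ∫ y, L y ∂P x) ν :=
    Integrable.integral_comp (κ := Kernel.const Unit ν) (a := ()) hint'
  calc q / p * ∫ y, L y ∂(P ∘ₘ ν)
      = q / p * ∫ x, ∫ y, L y ∂P x ∂ν :=
        congrArg _ (Kernel.integral_comp (κ := Kernel.const Unit ν) (a := ()) hint')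
    _ = ∫ x, q / p * ∫ y, L y ∂P x ∂ν := (integral_const_mul _ _).symm
    _ ≤ ∫ x, llr ν m x ∂ν := integral_le_integral_llr hac hint (hPL.const_mul _)
        ((hρ_meas.pow_const _).lintegral_kernel.pow_const q) hQ_le hFQ

lemma IsHypercontractive.klDiv_comp_le {P : Kernel X Y} [IsMarkovKernel P] {ν m : Measure X}
    [IsProbabilityMeasure ν] [IsProbabilityMeasure m] {p q : ℝ} (hp : 0 < p) (hq : 0 < q)
    (h : IsHypercontractive P m (P ∘ₘ m) p q) :
    klDiv (P ∘ₘ ν) (P ∘ₘ m) ≤ ENNReal.ofReal (p / q) * klDiv ν m := by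
  rcases eq_or_ne (klDiv ν m) ∞ with htop | hfin
  · simp [htop, ENNReal.mul_top, div_pos hp hq]
  obtain ⟨hac, hint⟩ := klDiv_ne_top_iff.1 hfin
  obtain ⟨hac', hint'⟩ := klDiv_ne_top_iff.1 (ne_top_of_le_ne_top hfin (klDiv_comp_right_le ν m P))
  rw [klDiv_of_ac_of_integrable hac hint, klDiv_of_ac_of_integrable hac' hint',
    ← ENNReal.ofReal_mul (div_pos hp hq).le]
  refine ENNReal.ofReal_le_ofReal ?_
  simp only [probReal_univ, add_sub_cancel_right]
  rw [← inv_div q p, inv_mul_eq_div, le_div_iff₀' (div_pos hq hp)]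
  exact h.mul_integral_llr_comp_le hp hq hac hint hint'

end Entropy

section Decay

open InformationTheory

lemma inv_pow_floor_le_mul_exp {c t₁ t : ℝ} (hc : 1 ≤ c) :
    c⁻¹ ^ ⌊t / t₁⌋₊ ≤ c * Real.exp (-(Real.log c / t₁) * t) := by
  have hc₀ : 0 < c := one_pos.trans_le hc
  have hfloor : Real.log c * (t / t₁) ≤ Real.log c * (⌊t / t₁⌋₊ + 1) :=
    mul_le_mul_of_nonneg_left (Nat.lt_floor_add_one _).le (Real.log_nonneg hc)
  calc c⁻¹ ^ ⌊t / t₁⌋₊ = Real.exp (-(⌊t / t₁⌋₊ * Real.log c)) := by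
        rw [inv_pow, Real.exp_neg, Real.exp_nat_mul, Real.exp_log hc₀]
    _ ≤ Real.exp (Real.log c + -(Real.log c / t₁) * t) := by
        refine Real.exp_le_exp.2 ?_
        rw [neg_mul, div_mul_eq_mul_div, ← mul_div_assoc']
        linarith
    _ = c * Real.exp (-(Real.log c / t₁) * t) := by rw [Real.exp_add, Real.exp_log hc₀]

variable {X : Type*} [MeasurableSpace X] {κ : ℝ → Kernel X X} {m : Measure X} {t₁ : ℝ}

lemma IsMarkovSemigroup.klDiv_comp_le_pow (hκ : IsMarkovSemigroup κ) (ht₁ : 0 ≤ t₁) {a : ℝ≥0∞}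
    (hstep : ∀ (ν : Measure X) [IsProbabilityMeasure ν],
      klDiv (κ t₁ ∘ₘ ν) m ≤ a * klDiv ν m) (ν : Measure X) [IsProbabilityMeasure ν] (n : ℕ) :
    klDiv (κ (n * t₁) ∘ₘ ν) m ≤ a ^ n * klDiv ν m := by
  have := hκ.markov
  induction n with
  | zero => simp [hκ.id_zero]
  | succ n ih =>
    calc klDiv (κ ((n + 1 : ℕ) * t₁) ∘ₘ ν) m = klDiv (κ t₁ ∘ₘ (κ (n * t₁) ∘ₘ ν)) m := by
          rw [Measure.comp_assoc, ← hκ.semigroup _ _ (by positivity) ht₁,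
            Nat.cast_succ, add_one_mul, add_comm (_ * _)]
      _ ≤ a * klDiv (κ (n * t₁) ∘ₘ ν) m := hstep _
      _ ≤ a * (a ^ n * klDiv ν m) := by gcongr
      _ = a ^ (n + 1) * klDiv ν m := by rw [← mul_assoc, pow_succ']

lemma IsMarkovSemigroup.klDiv_comp_le_exp (hκ : IsMarkovSemigroup κ) [IsFiniteMeasure m]
    (hinv : ∀ t, 0 ≤ t → κ t ∘ₘ m = m) (ht₁ : 0 < t₁) {c : ℝ} (hc : 1 ≤ c)
    (hstep : ∀ (ν : Measure X) [IsProbabilityMeasure ν],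
      klDiv (κ t₁ ∘ₘ ν) m ≤ ENNReal.ofReal c⁻¹ * klDiv ν m)
    (ν : Measure X) [IsProbabilityMeasure ν] {t : ℝ} (ht : 0 ≤ t) :
    klDiv (κ t ∘ₘ ν) m ≤
      ENNReal.ofReal (c * Real.exp (-(Real.log c / t₁) * t)) * klDiv ν m := by
  have := hκ.markov
  set n := ⌊t / t₁⌋₊
  set r := t - n * t₁ with hr_def
  have hr : 0 ≤ r := sub_nonneg.2 ((le_div_iff₀ ht₁).1 (Nat.floor_le (by positivity)))
  calc klDiv (κ t ∘ₘ ν) m = klDiv (κ r ∘ₘ (κ (n * t₁) ∘ₘ ν)) (κ r ∘ₘ m) := by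
        rw [hinv r hr, Measure.comp_assoc, ← hκ.semigroup _ _ (by positivity) hr, hr_def,
          sub_add_cancel]
    _ ≤ klDiv (κ (n * t₁) ∘ₘ ν) m := klDiv_comp_right_le _ _ _
    _ ≤ ENNReal.ofReal c⁻¹ ^ n * klDiv ν m := hκ.klDiv_comp_le_pow ht₁.le hstep ν n
    _ ≤ ENNReal.ofReal (c * Real.exp (-(Real.log c / t₁) * t)) * klDiv ν m := by
        rw [← ENNReal.ofReal_pow (inv_nonneg.2 (zero_le_one.trans hc))]
        gcongr
        exact inv_pow_floor_le_mul_exp hc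

lemma IsMarkovSemigroup.pi {ι : Type*} [Fintype ι] {X : ι → Type*}
    [∀ i, MeasurableSpace (X i)] {κ : ∀ i, ℝ → Kernel (X i) (X i)}
    [∀ i t, IsMarkovKernel (κ i t)] (hκ : ∀ i, IsMarkovSemigroup (κ i)) :
    IsMarkovSemigroup fun t => piKernel fun i => κ i t where
  markov _ := inferInstance
  id_zero := by simp_rw [(hκ _).id_zero, piKernel_id]
  semigroup s t hs ht := by simp_rw [piKernel_comp_piKernel, (hκ _).semigroup s t hs ht]

end Decay

theorem statement_14_general {E : Type*} [MeasurableSpace E] {μ : Measure E}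
    [IsProbabilityMeasure μ] {κ : ℝ → Kernel E E} {κhat : Kernel E E} [IsFiniteKernel κhat]
    {t₁ p q p' q' : ℝ} (ht₁ : 0 < t₁) (hpp' : p.HolderConjugate p') (hqq' : q.HolderConjugate q')
    (hpq : p ≤ q) (hκ : IsMarkovSemigroup κ) (hinv : ∀ t, 0 ≤ t → κ t ∘ₘ μ = μ)
    (hdual : ∀ f g : E → ℝ, BddMeasurableFn f → BddMeasurableFn g →
      ∫ x, f x * ∫ y, g y ∂κ t₁ x ∂μ = ∫ x, g x * ∫ y, f y ∂κhat x ∂μ)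
    (hhyp : ∀ g : E → ℝ, BddMeasurableFn g →
      eLpNorm (fun x => ∫ y, g y ∂κhat x) (ENNReal.ofReal p') μ ≤
        eLpNorm g (ENNReal.ofReal q') μ)
    {N : ℕ} (ν : Measure (Fin N → E)) [IsProbabilityMeasure ν] {t : ℝ} (ht : 0 ≤ t) :
    relEnt (ν.bind fun x => Measure.pi fun i => κ t (x i)) (Measure.pi fun _ => μ) ≤
      ENNReal.ofReal (q / p * Real.exp (-(Real.log (q / p) / t₁) * t)) *
        relEnt ν (Measure.pi fun _ => μ) := by
  have := hκ.markov
  have hhyp_κ : IsHypercontractive (κ t₁) μ μ p q :=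
    .of_dual hpp' hqq' (map_swap_compProd_of_integral_mul_eq hdual)
      (.of_eLpNorm_le hqq'.symm.pos hpp'.symm.pos hhyp)
  set K : ℝ → Kernel (Fin N → E) (Fin N → E) := fun t => piKernel fun _ => κ t
  have hK_inv (s : ℝ) (hs : 0 ≤ s) : K s ∘ₘ Measure.pi (fun _ => μ) = Measure.pi fun _ => μ := by
    simp only [K, piKernel_comp_pi, hinv s hs]
  have hK_hyp : IsHypercontractive (K t₁) (Measure.pi fun _ => μ)
      (K t₁ ∘ₘ Measure.pi fun _ => μ) p q := by
    rw [hK_inv t₁ ht₁.le]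
    exact .pi hpp'.lt.le hqq'.nonneg fun _ => hhyp_κ
  have hstep (η : Measure (Fin N → E)) [IsProbabilityMeasure η] :=
    hK_hyp.klDiv_comp_le (ν := η) hpp'.pos hqq'.pos
  rw [hK_inv t₁ ht₁.le, ← inv_div] at hstep
  change relEnt (K t ∘ₘ ν) _ ≤ _
  rw [relEnt_eq_klDiv, relEnt_eq_klDiv]
  exact (IsMarkovSemigroup.pi fun _ => hκ).klDiv_comp_le_exp hK_inv ht₁
    ((one_le_div hpp'.pos).2 hpq) hstep ν ht

/-- (Dimension-free exponential entropy decay for product dynamics.)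
Let `(κ_t)` be a Markov semigroup with invariant probability measure `μ`, and `(κ̂_t)` a dual
family of Markov kernels with respect to `μ`.  If `κ̂_{t₁}` is hypercontractive from
`L^{4/3}(μ)` to `L²(μ)` for some `t₁ > 0`, then there exist `c₀, λ₀ > 0`, depending only on
`t₁` (in particular independent of `N`), such that for all `N ≥ 1`, all probability measures
`ν^N` on `E^N`, and all `t ≥ 0`,
`Ent(ν^N κ_t^{⊗N} | μ^{⊗N}) ≤ c₀ e^{−λ₀ t} Ent(ν^N | μ^{⊗N})`. -/
theorem statement_14 (t₁ : ℝ) (ht₁ : 0 < t₁) :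
    ∃ c₀ lam₀ : ℝ, 0 < c₀ ∧ 0 < lam₀ ∧
      ∀ (E : Type) [MeasurableSpace E] (μ : Measure E) [IsProbabilityMeasure μ]
        (κ κhat : ℝ → Kernel E E),
        IsMarkovSemigroup κ →
        (∀ t : ℝ, IsMarkovKernel (κhat t)) →
        -- invariance of μ
        (∀ t : ℝ, 0 ≤ t → μ.bind (fun x => κ t x) = μ) →
        -- duality of κ̂ and κ with respect to μ
        (∀ t : ℝ, 0 ≤ t → ∀ f g : E → ℝ, BddMeasurableFn f → BddMeasurableFn g →
          ∫ x, f x * (∫ y, g y ∂(κ t x)) ∂μ = ∫ x, g x * (∫ y, f y ∂(κhat t x)) ∂μ) →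
        -- hypercontractivity of the dual kernel at time t₁
        (∀ g : E → ℝ, BddMeasurableFn g →
          eLpNorm (fun x => ∫ y, g y ∂(κhat t₁ x)) 2 μ ≤ eLpNorm g (4 / 3 : ℝ≥0∞) μ) →
        -- conclusion, uniform in N
        ∀ N : ℕ, 1 ≤ N → ∀ ν : Measure (Fin N → E), IsProbabilityMeasure ν →
          ∀ t : ℝ, 0 ≤ t →
            relEnt (ν.bind fun x => Measure.pi fun i => κ t (x i))
                (Measure.pi fun _ : Fin N => μ)
              ≤ ENNReal.ofReal (c₀ * Real.exp (-lam₀ * t)) *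
                  relEnt ν (Measure.pi fun _ : Fin N => μ) := by
  refine ⟨4 / 2, Real.log (4 / 2) / t₁, by norm_num, div_pos (Real.log_pos (by norm_num)) ht₁, ?_⟩
  intro E _ μ _ κ κhat hκ hκhat hinv hdual hhyp N _ ν _ t ht
  have hconj : Real.HolderConjugate 4 (4 / 3) := by
    rw [Real.holderConjugate_iff]
    norm_num
  exact statement_14_general ht₁ .two_two hconj (by norm_num) hκ hinv (hdual t₁ ht₁.le)
    (by simpa [ENNReal.ofReal_div_of_pos] using hhyp) ν ht
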